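/- Let U ⊆ ℝ² be a nonempty open set and let f : U → ℝ² be distance preserving, i.e. ‖f(x) − f(y)‖ = ‖x − y‖ for all x, y ∈ U. Then there exists an affine isometry g : ℝ² → ℝ² (a composition of a linear orthogonal map with a translation) such that g(x) = f(x) for every x ∈ U. -/

import Mathlib

/-!
Distances between points determine the inner products of the difference vectors from a base point,
so a congruence of two families of points makes their difference vectors have the same Gram matrix.
Equal Gram matrices mean that corresponding linear combinations have the same norm; hence sending
one family to the other is a well-defined linear isometry of spans, which extends to the whole
finite-dimensional space by an isometry between orthogonal complements.
-/

open Module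
open scoped Congruent

theorem exists_linearIsometry_range_of_norm_eq {𝕜 M E F : Type*} [DivisionRing 𝕜]
    [AddCommGroup M] [Module 𝕜 M] [SeminormedAddCommGroup E] [Module 𝕜 E]
    [NormedAddCommGroup F] [Module 𝕜 F] (f : M →ₗ[𝕜] E) (g : M →ₗ[𝕜] F)
    (h : ∀ x, ‖f x‖ = ‖g x‖) :
    ∃ L : LinearMap.range f →ₗᵢ[𝕜] F, ∀ x, L (f.rangeRestrict x) = g x := by
  have apply_range (x : M) : g.compLeftInverse f (f.rangeRestrict x) = g x :=
    g.compLeftInverse_apply_of_bdd f ⟨1, fun y ↦ by rw [one_mul, h]⟩ x (f x) rfl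
  refine ⟨⟨g.compLeftInverse f, ?_⟩, apply_range⟩
  rintro ⟨_, x, rfl⟩
  exact (congrArg norm (apply_range x)).trans (h x).symm

section LinearExtension

variable {𝕜 E F : Type*} [RCLike 𝕜]
  [NormedAddCommGroup E] [InnerProductSpace 𝕜 E] [NormedAddCommGroup F] [InnerProductSpace 𝕜 F]

theorem nonempty_linearIsometry_of_finrank_le [FiniteDimensional 𝕜 E] [FiniteDimensional 𝕜 F]
    (hEF : finrank 𝕜 E ≤ finrank 𝕜 F) : Nonempty (E →ₗᵢ[𝕜] F) := by
  let b := stdOrthonormalBasis 𝕜 E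
  let c := stdOrthonormalBasis 𝕜 F
  let φ : E →ₗ[𝕜] F := b.toBasis.constr 𝕜 (c ∘ Fin.castLE hEF)
  have φ_basis : φ ∘ b.toBasis = c ∘ Fin.castLE hEF := funext (b.toBasis.constr_basis 𝕜 _)
  have orthonormal_image : Orthonormal 𝕜 (φ ∘ b.toBasis) :=
    φ_basis ▸ c.orthonormal.comp _ (Fin.castLE_injective hEF)
  exact ⟨φ.isometryOfOrthonormal (b.coe_toBasis ▸ b.orthonormal) orthonormal_image⟩

theorem exists_linearIsometry_apply_eq_of_norm_eq {M : Type*} [AddCommGroup M] [Module 𝕜 M]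
    [FiniteDimensional 𝕜 E] [FiniteDimensional 𝕜 F] (hEF : finrank 𝕜 E ≤ finrank 𝕜 F)
    (f : M →ₗ[𝕜] E) (g : M →ₗ[𝕜] F) (h : ∀ x, ‖f x‖ = ‖g x‖) :
    ∃ A : E →ₗᵢ[𝕜] F, ∀ x, A (f x) = g x := by
  -- `LinearIsometry.extend` only extends maps into the ambient space, so first embed `E` in `F`.
  obtain ⟨φ⟩ := nonempty_linearIsometry_of_finrank_le hEF
  obtain ⟨L, hL⟩ := exists_linearIsometry_range_of_norm_eq (φ.toLinearMap ∘ₗ f) g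
    fun x ↦ (φ.norm_map (f x)).trans (h x)
  exact ⟨L.extend.comp φ, fun x ↦ (L.extend_apply _).trans (hL x)⟩

theorem norm_linearCombination_eq_of_gram_eq {ι : Type*} {u : ι → E} {w : ι → F}
    (h : Matrix.gram 𝕜 u = Matrix.gram 𝕜 w) (c : ι →₀ 𝕜) :
    ‖Finsupp.linearCombination 𝕜 u c‖ = ‖Finsupp.linearCombination 𝕜 w c‖ := by
  have inner_eq (i j : ι) : inner 𝕜 (u i) (u j) = inner 𝕜 (w i) (w j) := congrFun₂ h i j
  simp only [norm_eq_sqrt_re_inner (𝕜 := 𝕜), Finsupp.linearCombination_apply, Finsupp.sum_inner,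
    Finsupp.inner_sum, inner_smul_left, inner_smul_right, inner_eq]

theorem exists_linearIsometry_apply_eq_of_gram_eq [FiniteDimensional 𝕜 E] [FiniteDimensional 𝕜 F]
    (hEF : finrank 𝕜 E ≤ finrank 𝕜 F) {ι : Type*} {u : ι → E} {w : ι → F}
    (h : Matrix.gram 𝕜 u = Matrix.gram 𝕜 w) :
    ∃ A : E →ₗᵢ[𝕜] F, ∀ i, A (u i) = w i := by
  obtain ⟨A, hA⟩ := exists_linearIsometry_apply_eq_of_norm_eq hEF
    (Finsupp.linearCombination 𝕜 u) (Finsupp.linearCombination 𝕜 w)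
    (norm_linearCombination_eq_of_gram_eq h)
  refine ⟨A, fun i ↦ ?_⟩
  simpa only [Finsupp.linearCombination_single, one_smul] using hA (Finsupp.single i 1)

end LinearExtension

section AffineExtension

variable {V W P Q : Type*}
  [NormedAddCommGroup V] [InnerProductSpace ℝ V] [MetricSpace P] [NormedAddTorsor V P]
  [NormedAddCommGroup W] [InnerProductSpace ℝ W] [MetricSpace Q] [NormedAddTorsor W Q]

theorem gram_vsub_eq_of_congruent {ι : Type*} {u : ι → P} {w : ι → Q} (h : u ≅ w) (k : ι) :
    Matrix.gram ℝ (u · -ᵥ u k) = Matrix.gram ℝ (w · -ᵥ w k) := by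
  ext i j
  simp only [Matrix.gram_apply,
    real_inner_eq_norm_mul_self_add_norm_mul_self_sub_norm_sub_mul_self_div_two,
    vsub_sub_vsub_cancel_right, ← dist_eq_norm_vsub, h.dist_eq]

variable [FiniteDimensional ℝ V] [FiniteDimensional ℝ W]

theorem exists_affineIsometry_apply_eq_of_congruent (hVW : finrank ℝ V ≤ finrank ℝ W)
    {ι : Type*} {u : ι → P} {w : ι → Q} (h : u ≅ w) :
    ∃ g : P →ᵃⁱ[ℝ] Q, ∀ i, g (u i) = w i := by
  obtain ⟨p, q, hpq⟩ : ∃ p q, Matrix.gram ℝ (u · -ᵥ p) = Matrix.gram ℝ (w · -ᵥ q) := by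
    cases isEmpty_or_nonempty ι with
    | inl _ => exact ⟨Classical.arbitrary P, Classical.arbitrary Q, Subsingleton.elim _ _⟩
    | inr hι => exact hι.elim fun k ↦ ⟨u k, w k, gram_vsub_eq_of_congruent h k⟩
  obtain ⟨A, hA⟩ := exists_linearIsometry_apply_eq_of_gram_eq hVW hpq
  let g : P →ᵃⁱ[ℝ] Q := (AffineIsometryEquiv.vaddConst ℝ q).toAffineIsometry.comp
    (A.toAffineIsometry.comp (AffineIsometryEquiv.vaddConst ℝ p).symm.toAffineIsometry)
  exact ⟨g, fun i ↦ (congrArg (· +ᵥ q) (hA i)).trans (vsub_vadd (w i) q)⟩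

theorem local_plane_isometry_extends_to_affine_isometry_general
    (hVW : finrank ℝ V ≤ finrank ℝ W) (s : Set P) (f : P → Q)
    (hf : ∀ x ∈ s, ∀ y ∈ s, dist (f x) (f y) = dist x y) :
    ∃ g : P →ᵃⁱ[ℝ] Q, Set.EqOn f g s := by
  have congruent_domRestrict : ((↑) : s → P) ≅ s.domRestrict f :=
    .of_dist_eq fun x y ↦ (hf x x.2 y y.2).symm
  obtain ⟨g, hg⟩ := exists_affineIsometry_apply_eq_of_congruent hVW congruent_domRestrict
  exact ⟨g, fun x hx ↦ (hg ⟨x, hx⟩).symm⟩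

end AffineExtension

/-- Let `U ⊆ ℝ²` be a nonempty open set and `f : U → ℝ²` distance
preserving (`‖f x − f y‖ = ‖x − y‖` for `x, y ∈ U`). Then there is an affine isometry
`g : ℝ² → ℝ²` — a linear orthogonal map `A` followed by a translation by `b` — with
`g x = f x` for every `x ∈ U`. -/
theorem local_plane_isometry_extends_to_affine_isometry
    (U : Set (EuclideanSpace ℝ (Fin 2))) (hU : IsOpen U) (hne : U.Nonempty)
    (f : EuclideanSpace ℝ (Fin 2) → EuclideanSpace ℝ (Fin 2))
    (hf : ∀ x ∈ U, ∀ y ∈ U, dist (f x) (f y) = dist x y) :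
    ∃ (A : EuclideanSpace ℝ (Fin 2) ≃ₗᵢ[ℝ] EuclideanSpace ℝ (Fin 2))
      (b : EuclideanSpace ℝ (Fin 2)),
      ∀ x ∈ U, f x = A x + b := by
  obtain ⟨g, hg⟩ := local_plane_isometry_extends_to_affine_isometry_general le_rfl U f hf
  exact ⟨g.linearIsometry.toLinearIsometryEquiv rfl, g 0, fun x hx ↦
    (hg hx).trans (congrFun g.toAffineMap.decomp x)⟩
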